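/- For a bounded double complex of finite-dimensional complex vector spaces and every bidegree (p,q), one has the identity h_BC^{p,q} + h_A^{p,q} = h_∂̄^{p,q} + h_∂^{p,q} + a^{p,q} + f^{p,q}; in particular h_BC^{p,q} + h_A^{p,q} ≥ h_∂̄^{p,q} + h_∂^{p,q}. -/

import Mathlib

open Submodule

/-- A double complex of complex vector spaces, presented as a bigraded direct-sum
decomposition `K p q` of an ambient space `V`, together with anticommuting
differentials `d1 = ∂` (of bidegree `(1,0)`) and `d2 = ∂̄` (of bidegree `(0,1)`). -/
structure DoubleComplex (V : Type*) [AddCommGroup V] [Module ℂ V] where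
  K : ℤ → ℤ → Submodule ℂ V
  isInternal : DirectSum.IsInternal fun pq : ℤ × ℤ => K pq.1 pq.2
  d1 : V →ₗ[ℂ] V
  d2 : V →ₗ[ℂ] V
  d1_mem : ∀ p q : ℤ, ∀ x ∈ K p q, d1 x ∈ K (p + 1) q
  d2_mem : ∀ p q : ℤ, ∀ x ∈ K p q, d2 x ∈ K p (q + 1)
  d1_d1 : d1 ∘ₗ d1 = 0
  d2_d2 : d2 ∘ₗ d2 = 0
  anticomm : d1 ∘ₗ d2 + d2 ∘ₗ d1 = 0

/-- The dimension (as a natural number) of the quotient of a submodule `M` of `V`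
by (the trace on `M` of) a submodule `N`. -/
noncomputable def qdim {V : Type*} [AddCommGroup V] [Module ℂ V]
    (M N : Submodule ℂ V) : ℕ :=
  Module.finrank ℂ (↥M ⧸ N.comap M.subtype)

/-- The linear map between quotients `M₁/N₁ → M₂/N₂` induced by the identity,
for `M₁ ≤ M₂` and `N₁ ≤ N₂`. -/
def quotMap {V : Type*} [AddCommGroup V] [Module ℂ V] {M₁ N₁ M₂ N₂ : Submodule ℂ V}
    (hM : M₁ ≤ M₂) (hN : N₁ ≤ N₂) :
    (↥M₁ ⧸ N₁.comap M₁.subtype) →ₗ[ℂ] (↥M₂ ⧸ N₂.comap M₂.subtype) :=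
  Submodule.mapQ _ _ (Submodule.inclusion hM) fun _ hx => hN hx

namespace DoubleComplex

variable {V : Type*} [AddCommGroup V] [Module ℂ V] (D : DoubleComplex V)

/-- A double complex is bounded if only finitely many components are non-zero. -/
def Bounded : Prop := Set.Finite {pq : ℤ × ℤ | D.K pq.1 pq.2 ≠ ⊥}

lemma d1_d1_apply (x : V) : D.d1 (D.d1 x) = 0 := by
  simpa using LinearMap.ext_iff.mp D.d1_d1 x

lemma d2_d2_apply (x : V) : D.d2 (D.d2 x) = 0 := by
  simpa using LinearMap.ext_iff.mp D.d2_d2 x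

lemma anticomm_apply (x : V) : D.d1 (D.d2 x) + D.d2 (D.d1 x) = 0 := by
  simpa using LinearMap.ext_iff.mp D.anticomm x

/-- Numerator `ker ∂̄ ∩ K^{p,q}` of the Dolbeault cohomology. -/
def dolN (p q : ℤ) : Submodule ℂ V := LinearMap.ker D.d2 ⊓ D.K p q
/-- Denominator `∂̄ K^{p,q-1}` of the Dolbeault cohomology. -/
def dolD (p q : ℤ) : Submodule ℂ V := (D.K p (q - 1)).map D.d2
/-- Numerator `ker ∂ ∩ K^{p,q}` of the conjugate Dolbeault cohomology. -/
def conjN (p q : ℤ) : Submodule ℂ V := LinearMap.ker D.d1 ⊓ D.K p q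
/-- Denominator `∂ K^{p-1,q}` of the conjugate Dolbeault cohomology. -/
def conjD (p q : ℤ) : Submodule ℂ V := (D.K (p - 1) q).map D.d1
/-- Numerator `ker ∂ ∩ ker ∂̄ ∩ K^{p,q}` of the Bott-Chern cohomology. -/
def bcN (p q : ℤ) : Submodule ℂ V := LinearMap.ker D.d1 ⊓ LinearMap.ker D.d2 ⊓ D.K p q
/-- Denominator `∂∂̄ K^{p-1,q-1}` of the Bott-Chern cohomology. -/
def bcD (p q : ℤ) : Submodule ℂ V := (D.K (p - 1) (q - 1)).map (D.d1 ∘ₗ D.d2)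
/-- Numerator `ker ∂∂̄ ∩ K^{p,q}` of the Aeppli cohomology. -/
def aeN (p q : ℤ) : Submodule ℂ V := LinearMap.ker (D.d1 ∘ₗ D.d2) ⊓ D.K p q
/-- Denominator `∂ K^{p-1,q} + ∂̄ K^{p,q-1}` of the Aeppli cohomology. -/
def aeD (p q : ℤ) : Submodule ℂ V := (D.K (p - 1) q).map D.d1 ⊔ (D.K p (q - 1)).map D.d2

/-- The degree-`k` part `Tot^k = ⊕_{p+q=k} K^{p,q}` of the total complex. -/
def Tot (k : ℤ) : Submodule ℂ V := ⨆ p : ℤ, D.K p (k - p)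
/-- The total differential `d = ∂ + ∂̄`. -/
def dT : V →ₗ[ℂ] V := D.d1 + D.d2
/-- Numerator `ker d ∩ Tot^k` of the de Rham cohomology of the total complex. -/
def dRN (k : ℤ) : Submodule ℂ V := LinearMap.ker D.dT ⊓ D.Tot k
/-- Denominator `d (Tot^{k-1})` of the de Rham cohomology of the total complex. -/
def dRD (k : ℤ) : Submodule ℂ V := (D.Tot (k - 1)).map D.dT

/-- Hodge number `h_∂̄^{p,q}`. -/
noncomputable def hDol (p q : ℤ) : ℕ := qdim (D.dolN p q) (D.dolD p q)
/-- Conjugate Hodge number `h_∂^{p,q}`. -/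
noncomputable def hConj (p q : ℤ) : ℕ := qdim (D.conjN p q) (D.conjD p q)
/-- Bott-Chern number `h_BC^{p,q}`. -/
noncomputable def hBC (p q : ℤ) : ℕ := qdim (D.bcN p q) (D.bcD p q)
/-- Aeppli number `h_A^{p,q}`. -/
noncomputable def hAe (p q : ℤ) : ℕ := qdim (D.aeN p q) (D.aeD p q)
/-- Betti number `b_k` of the total complex. -/
noncomputable def b (k : ℤ) : ℕ := qdim (D.dRN k) (D.dRD k)

/-- The `∂∂̄`-lemma property:
`ker ∂ ∩ ker ∂̄ ∩ (im ∂ + im ∂̄) ∩ K^{p,q} = ∂∂̄ K^{p-1,q-1}` for every `(p,q)`. -/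
def SatisfiesDdbarLemma : Prop :=
  ∀ p q : ℤ,
    LinearMap.ker D.d1 ⊓ LinearMap.ker D.d2 ⊓ (D.conjD p q ⊔ D.dolD p q) ⊓ D.K p q =
      D.bcD p q

end DoubleComplex

namespace DoubleComplex

variable {V : Type*} [AddCommGroup V] [Module ℂ V] (D : DoubleComplex V)

/-- Numerator `im ∂ ∩ im ∂̄ ∩ K^{p,q}` of the Varouchas space `A^{p,q}`. -/
def varAN (p q : ℤ) : Submodule ℂ V := D.conjD p q ⊓ D.dolD p q

/-- Denominator `(ker ∂̄ + ker ∂) ∩ K^{p,q}` of the Varouchas space `F^{p,q}`. -/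
def varFD (p q : ℤ) : Submodule ℂ V :=
  (LinearMap.ker D.d2 ⊓ D.K p q) ⊔ (LinearMap.ker D.d1 ⊓ D.K p q)

/-- `a^{p,q} = dim A^{p,q}` where `A^{p,q} = (im ∂ ∩ im ∂̄)/im ∂∂̄`. -/
noncomputable def aV (p q : ℤ) : ℕ := qdim (D.varAN p q) (D.bcD p q)

/-- `f^{p,q} = dim F^{p,q}` where `F^{p,q} = ker ∂∂̄/(ker ∂̄ + ker ∂)`. -/
noncomputable def fV (p q : ℤ) : ℕ := qdim (D.aeN p q) (D.varFD p q)

end DoubleComplex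

/-!
In bidegree `(p,q)` let `C ≤ C'` be the image and kernel of `∂`, and `D ≤ D'` those of `∂̄`. The
chain `im ∂∂̄ ≤ C ⊓ D ≤ C' ⊓ D'` splits the Bott-Chern space into `A` and `(C' ⊓ D')/(C ⊓ D)`, and
the chain `C ⊔ D ≤ C' ⊔ D' ≤ ker ∂∂̄` splits the Aeppli space into `F` and `(C' ⊔ D')/(C ⊔ D)`. The
two remaining quotients together have the dimension of `C'/C ⊕ D'/D`, as one sees by enlarging `C`
and `D` one at a time and using the modular law.
-/

section QuotientRank

universe u v

variable {R : Type v} {E : Type u} [Ring R] [AddCommGroup E] [Module R E]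

/-- The rank of `M / (M ⊓ N)` as a cardinal, with the arguments in the order of `qdim`. In contrast
to `qdim`, it is additive along chains of submodules even when the quotients are
infinite-dimensional. -/
noncomputable def qrank (M N : Submodule R E) : Cardinal.{u} :=
  Module.rank R (↥M ⧸ N.comap M.subtype)

theorem qrank_sup_left (M N : Submodule R E) : qrank (M ⊔ N) N = qrank M (M ⊓ N) :=
  (LinearMap.quotientInfEquivSupQuotient M N).rank_eq.symm

variable [HasRankNullity.{u} R]

theorem qrank_add_qrank {L M N : Submodule R E} (hLM : L ≤ M) (hMN : M ≤ N) :
    qrank N M + qrank M L = qrank N L := by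
  let ι : (↥M ⧸ L.comap M.subtype) →ₗ[R] (↥N ⧸ L.comap N.subtype) :=
    mapQ _ _ (inclusion hMN) fun _ hx => hx
  let π : (↥N ⧸ L.comap N.subtype) →ₗ[R] (↥N ⧸ M.comap N.subtype) := factor (comap_mono hLM)
  have hι : Function.Injective ι :=
    LinearMap.ker_eq_bot.mp (ker_liftQ_eq_bot _ _ _ fun x hx => by simpa using hx)
  have hexact : LinearMap.ker π = LinearMap.range ι := by
    rw [ker_mapQ, comap_id, ← range_inclusion M N hMN]
    exact (range_mapQ _ _ _ _).symm
  have hπ : Function.Surjective π := factor_surjective _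
  have hrank := LinearMap.rank_eq_of_surjective hπ
  rw [hexact, rank_range_of_injective ι hι] at hrank
  exact hrank.symm

theorem qrank_inf_add_qrank_sup_left {M N : Submodule R E} (hNM : N ≤ M) (P : Submodule R E) :
    qrank (M ⊓ P) (N ⊓ P) + qrank (M ⊔ P) (N ⊔ P) = qrank M N := by
  have hinf : qrank (M ⊓ P) (N ⊓ P) = qrank (N ⊔ M ⊓ P) N := by
    rw [sup_comm, qrank_sup_left, inf_right_comm, inf_eq_right.mpr hNM]
  have hsup : qrank (M ⊔ P) (N ⊔ P) = qrank M (N ⊔ M ⊓ P) := by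
    have hsup_eq : M ⊔ P = M ⊔ (N ⊔ P) := by rw [← sup_assoc, sup_eq_left.mpr hNM]
    have hmodular : M ⊓ (N ⊔ P) = N ⊔ M ⊓ P := by
      rw [inf_comm, sup_inf_assoc_of_le P hNM, inf_comm]
    rw [hsup_eq, qrank_sup_left, hmodular]
  rw [hinf, hsup, add_comm, qrank_add_qrank le_sup_left (sup_le hNM inf_le_left)]

theorem qrank_inf_add_qrank_sup {M N M' N' : Submodule R E} (hNM : N ≤ M) (hNM' : N' ≤ M') :
    qrank (M ⊓ M') (N ⊓ N') + qrank (M ⊔ M') (N ⊔ N') = qrank M N + qrank M' N' := by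
  have hinf := qrank_add_qrank (inf_le_inf_left N hNM') (inf_le_inf_right M' hNM)
  have hsup := qrank_add_qrank (sup_le_sup_left hNM' N) (sup_le_sup_right hNM M')
  have hM' := qrank_inf_add_qrank_sup_left hNM' N
  rw [inf_comm M', inf_comm N', sup_comm M', sup_comm N'] at hM'
  rw [← hinf, ← hsup, add_add_add_comm, qrank_inf_add_qrank_sup_left hNM, hM']

end QuotientRank

namespace DoubleComplex

variable {V : Type*} [AddCommGroup V] [Module ℂ V] (D : DoubleComplex V) (p q : ℤ)

theorem d2_d1_apply (x : V) : D.d2 (D.d1 x) = -D.d1 (D.d2 x) :=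
  eq_neg_of_add_eq_zero_right (D.anticomm_apply x)

theorem conjD_le_conjN : D.conjD p q ≤ D.conjN p q := by
  rintro _ ⟨x, hx, rfl⟩
  exact ⟨D.d1_d1_apply x, by simpa using D.d1_mem _ _ x hx⟩

theorem dolD_le_dolN : D.dolD p q ≤ D.dolN p q := by
  rintro _ ⟨x, hx, rfl⟩
  exact ⟨D.d2_d2_apply x, by simpa using D.d2_mem _ _ x hx⟩

theorem bcD_le_varAN : D.bcD p q ≤ D.varAN p q := by
  rintro _ ⟨x, hx, rfl⟩
  have hd1 : D.d1 x ∈ D.K p (q - 1) := by simpa using D.d1_mem _ _ x hx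
  have hd2 : D.d2 x ∈ D.K (p - 1) q := by simpa using D.d2_mem _ _ x hx
  exact ⟨⟨D.d2 x, hd2, rfl⟩, ⟨-D.d1 x, neg_mem hd1, by simp [d2_d1_apply]⟩⟩

theorem bcN_eq_conjN_inf_dolN : D.bcN p q = D.conjN p q ⊓ D.dolN p q :=
  inf_inf_distrib_right _ _ _

theorem varFD_eq_conjN_sup_dolN : D.varFD p q = D.conjN p q ⊔ D.dolN p q :=
  sup_comm _ _

theorem ker_d1_le_ker_d1_comp_d2 : LinearMap.ker D.d1 ≤ LinearMap.ker (D.d1 ∘ₗ D.d2) := by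
  intro x hx
  have h := D.d2_d1_apply x
  rw [LinearMap.mem_ker.mp hx, map_zero] at h
  exact neg_eq_zero.mp h.symm

theorem varFD_le_aeN : D.varFD p q ≤ D.aeN p q :=
  sup_le (inf_le_inf_right _ (LinearMap.ker_le_ker_comp D.d2 D.d1))
    (inf_le_inf_right _ D.ker_d1_le_ker_d1_comp_d2)

theorem qrank_bcN_bcD : qrank (D.bcN p q) (D.bcD p q) =
    qrank (D.conjN p q ⊓ D.dolN p q) (D.conjD p q ⊓ D.dolD p q) +
      qrank (D.varAN p q) (D.bcD p q) := by
  rw [bcN_eq_conjN_inf_dolN]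
  exact (qrank_add_qrank (D.bcD_le_varAN p q)
    (inf_le_inf (D.conjD_le_conjN p q) (D.dolD_le_dolN p q))).symm

theorem qrank_aeN_aeD : qrank (D.aeN p q) (D.aeD p q) =
    qrank (D.aeN p q) (D.varFD p q) +
      qrank (D.conjN p q ⊔ D.dolN p q) (D.conjD p q ⊔ D.dolD p q) := by
  have hle := D.varFD_le_aeN p q
  rw [varFD_eq_conjN_sup_dolN] at hle ⊢
  exact (qrank_add_qrank (sup_le_sup (D.conjD_le_conjN p q) (D.dolD_le_dolN p q)) hle).symm

theorem qrank_bcN_bcD_add_qrank_aeN_aeD :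
    qrank (D.bcN p q) (D.bcD p q) + qrank (D.aeN p q) (D.aeD p q) =
      qrank (D.dolN p q) (D.dolD p q) + qrank (D.conjN p q) (D.conjD p q) +
        qrank (D.varAN p q) (D.bcD p q) + qrank (D.aeN p q) (D.varFD p q) := by
  have h := qrank_inf_add_qrank_sup (D.conjD_le_conjN p q) (D.dolD_le_dolN p q)
  rw [qrank_bcN_bcD, qrank_aeN_aeD, add_comm (qrank (D.dolN p q) _), ← h]
  ring

end DoubleComplex

open DoubleComplex Cardinal in
theorem hBC_add_hAe_eq_general {V : Type*} [AddCommGroup V] [Module ℂ V]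
    (D : DoubleComplex V) (p q : ℤ)
    [FiniteDimensional ℂ (↥(D.bcN p q) ⧸ (D.bcD p q).comap (D.bcN p q).subtype)]
    [FiniteDimensional ℂ (↥(D.aeN p q) ⧸ (D.aeD p q).comap (D.aeN p q).subtype)] :
    D.hBC p q + D.hAe p q = D.hDol p q + D.hConj p q + D.aV p q + D.fV p q ∧
    D.hDol p q + D.hConj p q ≤ D.hBC p q + D.hAe p q := by
  have hrank := D.qrank_bcN_bcD_add_qrank_aeN_aeD p q
  have hbc : qrank (D.bcN p q) (D.bcD p q) < ℵ₀ := Module.rank_lt_aleph0 ℂ _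
  have hae : qrank (D.aeN p q) (D.aeD p q) < ℵ₀ := Module.rank_lt_aleph0 ℂ _
  have hsum := hrank.symm.trans_lt (add_lt_aleph0 hbc hae)
  simp only [add_lt_aleph0_iff] at hsum
  obtain ⟨⟨⟨hdol, hconj⟩, ha⟩, hf⟩ := hsum
  have heq : D.hBC p q + D.hAe p q = D.hDol p q + D.hConj p q + D.aV p q + D.fV p q := by
    have htoNat := congrArg toNat hrank
    rwa [toNat_add hbc hae, toNat_add (add_lt_aleph0 (add_lt_aleph0 hdol hconj) ha) hf,
      toNat_add (add_lt_aleph0 hdol hconj) ha, toNat_add hdol hconj] at htoNat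
  exact ⟨heq, by omega⟩

open DoubleComplex in
/-- For a bounded double complex of finite-dimensional complex vector spaces and every
bidegree `(p,q)`, `h_BC^{p,q} + h_A^{p,q} = h_∂̄^{p,q} + h_∂^{p,q} + a^{p,q} + f^{p,q}`;
in particular `h_BC^{p,q} + h_A^{p,q} ≥ h_∂̄^{p,q} + h_∂^{p,q}`. -/
theorem hBC_add_hAe_eq {V : Type*} [AddCommGroup V] [Module ℂ V]
    [FiniteDimensional ℂ V] (D : DoubleComplex V) (hb : D.Bounded) (p q : ℤ) :
    D.hBC p q + D.hAe p q = D.hDol p q + D.hConj p q + D.aV p q + D.fV p q ∧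
    D.hDol p q + D.hConj p q ≤ D.hBC p q + D.hAe p q :=
  hBC_add_hAe_eq_general D p q
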